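/- Fix γ₀ ∈ ℝ, an integer k ≥ 0, and set J′_h := S_h + γ₀h. Then, as h → 0 with ε = ε(h) → 0 and ε(h)/√h → ∞, for each choice of sign: (1) E[ (∓J′_h)^k · φ( (ε ± J′_h)/(σ√h) ) ] = O(h^{3/2}·ε^{k−Y−1}) + O(ε^{k}·e^{−ε²/(2σ²h)}); and (2) E[ ((ε ± J′_h)/(σ√h))^k · φ( (ε ± J′_h)/(σ√h) ) ] = O(h^{(3−k)/2}·ε^{k−Y−1}) + O(ε^{k}·h^{−k/2}·e^{−ε²/(2σ²h)}). -/

import Mathlib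

open MeasureTheory ProbabilityTheory Filter Asymptotics Set
open scoped Topology NNReal ENNReal Real

noncomputable section

/-- The Lévy density `s(x) = (C₊·1_{x>0} + C₋·1_{x<0})·q(x)·|x|^{−1−Y}`. -/
def levyDensity (Y Cp Cm : ℝ) (q : ℝ → ℝ) (x : ℝ) : ℝ :=
  (if 0 < x then Cp else if x < 0 then Cm else 0) * q x * |x| ^ (-1 - Y)

/-- The Lévy measure `ν(dx) = s(x) dx`. -/
def levyMeasure (Y Cp Cm : ℝ) (q : ℝ → ℝ) : Measure ℝ :=
  volume.withDensity fun x => ENNReal.ofReal (levyDensity Y Cp Cm q x)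

/-- The Lévy exponent `ψ_J(u) = ibu + ∫ (e^{iux} − 1 − iux·1_{|x|≤1}) ν(dx)`. -/
def psiJ (b Y Cp Cm : ℝ) (q : ℝ → ℝ) (u : ℝ) : ℂ :=
  Complex.I * b * u +
    ∫ x : ℝ,
      (Complex.exp (Complex.I * u * x) - 1 - (if |x| ≤ 1 then Complex.I * u * x else 0))
      ∂(levyMeasure Y Cp Cm q)

/-- The scale parameter `ς = ((C₊+C₋)Γ(−Y)|cos(πY/2)|)^{1/Y}`. -/
def varsigma (Y Cp Cm : ℝ) : ℝ :=
  ((Cp + Cm) * Real.Gamma (-Y) * |Real.cos (π * Y / 2)|) ^ (1 / Y)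

/-- The stable part of the Lévy exponent:
`ς^Y |u|^Y (1 − iβ·sgn(u)·tan(πY/2))` with `β = (C₊−C₋)/(C₊+C₋)`. -/
def stablePart (Y Cp Cm : ℝ) (u : ℝ) : ℂ :=
  (varsigma Y Cp Cm ^ Y * |u| ^ Y : ℝ) *
    (1 - Complex.I * ((Cp - Cm) / (Cp + Cm)) * Real.sign u * Real.tan (π * Y / 2))

/-- Characteristic function of `X̃_h`, the time-`h` marginal of a Brownian motion with
variance `σ²` plus an independent strictly `Y`-stable process. -/
def tildeCF (σ Y Cp Cm : ℝ) (h u : ℝ) : ℂ :=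
  Complex.exp (-(σ ^ 2 * u ^ 2 * h / 2) - h * stablePart Y Cp Cm u)


/-- Characteristic function of the strictly `Y`-stable variable `S`. -/
def stableCF (Y Cp Cm : ℝ) (u : ℝ) : ℂ := Complex.exp (-stablePart Y Cp Cm u)

/-- Standard normal density `φ`. -/
def gaussDensity (x : ℝ) : ℝ := (Real.sqrt (2 * π))⁻¹ * Real.exp (-x ^ 2 / 2)

lemma aux_exp_bound (r : ℝ) (hr : 0 < r) :
    ∃ M : ℝ, 0 < M ∧ ∀ w : ℝ, 0 ≤ w → (1 + w) ^ 3 * Real.exp (-(r * w)) ≤ M := by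
  refine ⟨(1 + 3 / r) ^ 3, by positivity, fun w hw => ?_⟩
  have h1 : 1 + w ≤ (1 + 3 / r) * Real.exp (r * w / 3) := by
    have e1 : 1 ≤ Real.exp (r * w / 3) := Real.one_le_exp (by positivity)
    have e2 : r * w / 3 + 1 ≤ Real.exp (r * w / 3) := Real.add_one_le_exp _
    have e3 : w ≤ 3 / r * Real.exp (r * w / 3) := by
      rw [div_mul_eq_mul_div, le_div_iff₀ hr]; nlinarith
    linarith
  have h2 : (1 + w) ^ 3 ≤ ((1 + 3 / r) * Real.exp (r * w / 3)) ^ 3 :=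
    pow_le_pow_left₀ (by positivity) h1 3
  have h3 : ((1 + 3 / r) * Real.exp (r * w / 3)) ^ 3 = (1 + 3 / r) ^ 3 * Real.exp (r * w) := by
    rw [mul_pow, ← Real.exp_nat_mul]; congr 2; push_cast; ring
  calc (1 + w) ^ 3 * Real.exp (-(r * w))
      ≤ ((1 + 3 / r) ^ 3 * Real.exp (r * w)) * Real.exp (-(r * w)) := by
        rw [← h3]; gcongr
    _ = _ := by rw [mul_assoc, ← Real.exp_add]; simp

lemma aux_sub_one (z : ℂ) (hz : z.re ≤ 0) : ‖Complex.exp z - 1‖ ≤ 2 * ‖z‖ := by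
  rcases le_total ‖z‖ 1 with h | h
  · exact Complex.norm_exp_sub_one_le h
  · have : ‖Complex.exp z‖ ≤ 1 := by rw [Complex.norm_exp]; exact Real.exp_le_one_iff.2 hz
    calc _ ≤ ‖Complex.exp z‖ + ‖(1:ℂ)‖ := norm_sub_le _ _
      _ ≤ _ := by simp; linarith

lemma half_line_ibp (Y K : ℝ) (hY1 : 1 < Y) (hY2 : Y < 2) (hK : 0 ≤ K) (f f1 f2 f3 : ℝ → ℂ)
    (hd0 : ∀ u : ℝ, 0 < u → HasDerivAt f (f1 u) u)
    (hd1 : ∀ u : ℝ, 0 < u → HasDerivAt f1 (f2 u) u)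
    (hd2 : ∀ u : ℝ, 0 < u → HasDerivAt f2 (f3 u) u)
    (hb0 : ∀ u : ℝ, 0 < u → ‖f u - 1‖ ≤ K * u ^ Y)
    (hb1 : ∀ u : ℝ, 0 < u → ‖f1 u‖ ≤ K * u ^ Y / u)
    (hb2 : ∀ u : ℝ, 0 < u → ‖f2 u‖ ≤ K * u ^ Y / u ^ 2)
    (hb3 : ∀ u : ℝ, 0 < u → ‖f3 u‖ ≤ K * u ^ Y / u ^ 3)
    (hIntg : IntegrableOn f (Ioi 0)) (hc3 : ContinuousOn f3 (Ioi 0))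
    (ht0 : Tendsto f atTop (𝓝 0)) (ht1 : Tendsto f1 atTop (𝓝 0)) (x : ℝ) (hx : x ≠ 0) :
    |(∫ u in Ioi (0:ℝ), Complex.exp (-(Complex.I * x * u)) * f u).re|
      ≤ (4 * K + K / (2 - Y)) * |x| ^ (-1 - Y) := by
  set D : ℂ := Complex.I * x with hD
  have hD0 : D ≠ 0 := mul_ne_zero Complex.I_ne_zero (by exact_mod_cast hx)
  have hDn : ‖D‖ = |x| := by simp [hD]
  have hDre : (1 / D).re = 0 := by simp [hD, Complex.inv_re, Complex.div_re]
  have hxa : 0 < |x| := abs_pos.2 hx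
  set a : ℝ := |x|⁻¹ with ha
  have ha0 : 0 < a := inv_pos.2 hxa
  have hDa : ‖D‖ = a⁻¹ := by rw [hDn, ha, inv_inv]
  set e : ℝ → ℂ := fun u => Complex.exp (-(D * u)) with he
  have hen : ∀ u : ℝ, ‖e u‖ = 1 := by
    intro u; simp only [he, Complex.norm_exp]; simp [hD]
  have hec : Continuous e := by fun_prop
  have hed : ∀ u : ℝ, HasDerivAt e (-D * e u) u := by
    intro u
    have h1 : HasDerivAt (fun u : ℝ => (u : ℂ)) 1 u := by
      simpa using (hasDerivAt_id u).ofReal_comp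
    have := ((h1.const_mul D).neg).cexp
    refine HasDerivAt.congr_deriv (f := e) this ?_
    simp only [he, Pi.neg_apply]; ring
  have hrp : ∀ u : ℝ, 0 < u → u ^ Y / u ^ 3 = u ^ (Y - 3) := by
    intro u hu
    rw [Real.rpow_sub hu]; norm_cast
  -- integrability
  have hef : IntegrableOn (fun u => e u * f u) (Ioi 0) := by
    refine hIntg.bdd_mul (c := 1) hec.aestronglyMeasurable ?_
    exact Eventually.of_forall fun u => (hen u).le
  have hsub : Ioi a ⊆ Ioi 0 := Ioi_subset_Ioi ha0.le
  have hdom : IntegrableOn (fun u : ℝ => K * u ^ (Y - 3)) (Ioi a) :=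
    (integrableOn_Ioi_rpow_of_lt (by linarith) ha0).const_mul K
  have hef3b : ∀ u ∈ Ioi a, ‖e u * f3 u‖ ≤ K * u ^ (Y - 3) := by
    intro u hu
    rw [norm_mul, hen, one_mul, ← hrp u (hsub hu), ← mul_div_assoc]
    exact hb3 u (hsub hu)
  have hef3 : IntegrableOn (fun u => e u * f3 u) (Ioi a) := by
    refine Integrable.mono' hdom ?_ ?_
    · exact (hec.continuousOn.mul (hc3.mono hsub)).aestronglyMeasurable measurableSet_Ioi
    · exact (ae_restrict_iff' measurableSet_Ioi).2 (Eventually.of_forall hef3b)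
  have hef3i : ‖∫ u in Ioi a, e u * f3 u‖ ≤ K * (a ^ (Y - 2) / (2 - Y)) := by
    calc _ ≤ ∫ u in Ioi a, K * u ^ (Y - 3) :=
          norm_integral_le_of_norm_le hdom
            ((ae_restrict_iff' measurableSet_Ioi).2 (Eventually.of_forall hef3b))
      _ = _ := by
          rw [integral_const_mul, integral_Ioi_rpow_of_lt (by linarith) ha0]
          congr 1
          rw [show Y - 3 + 1 = Y - 2 by ring, show Y - 2 = -(2 - Y) by ring, neg_div_neg_eq]
  -- tail
  set H : ℝ → ℂ := fun u => e u * (f u / D + f1 u / D ^ 2 + f2 u / D ^ 3) with hH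
  have hHd : ∀ u : ℝ, 0 < u → HasDerivAt H (-(e u * f u) + e u * f3 u / D ^ 3) u := by
    intro u hu
    have := (hed u).mul ((((hd0 u hu).div_const D).add ((hd1 u hu).div_const (D ^ 2))).add
      ((hd2 u hu).div_const (D ^ 3)))
    refine HasDerivAt.congr_deriv (f := H) this ?_
    simp only [Pi.add_apply]
    field_simp; ring
  have ht2 : Tendsto f2 atTop (𝓝 0) := by
    have h0 : Tendsto (fun u : ℝ => K * u ^ (-(2 - Y))) atTop (𝓝 0) := by
      simpa using (tendsto_rpow_neg_atTop (show 0 < 2 - Y by linarith)).const_mul K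
    refine squeeze_zero_norm' ?_ h0
    filter_upwards [eventually_gt_atTop 0] with u hu
    refine (hb2 u hu).trans (le_of_eq ?_)
    rw [show -(2 - Y) = Y - 2 by ring, Real.rpow_sub hu, mul_div_assoc]; norm_cast
  have hHt : Tendsto H atTop (𝓝 0) := by
    have h0 : Tendsto (fun u => f u / D + f1 u / D ^ 2 + f2 u / D ^ 3) atTop (𝓝 0) := by
      simpa using ((ht0.div_const D).add (ht1.div_const (D ^ 2))).add (ht2.div_const (D ^ 3))
    refine squeeze_zero_norm (fun u => ?_) (by simpa using h0.norm)
    simp only [hH]; rw [norm_mul, hen, one_mul]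
  have htail := integral_Ioi_of_hasDerivAt_of_tendsto (a := a) (m := 0)
    (hHd a ha0).continuousAt.continuousWithinAt (fun u hu => hHd u (hsub hu))
    ((hef.mono_set hsub).neg.add (hef3.div_const (D ^ 3))) hHt
  have h1 : IntegrableOn (fun u => -(e u * f u)) (Ioi a) := (hef.mono_set hsub).neg
  have h2 : IntegrableOn (fun u => e u * f3 u / D ^ 3) (Ioi a) := hef3.div_const (D ^ 3)
  rw [integral_add h1 h2, integral_neg, integral_div] at htail
  -- head
  have hie : IntegrableOn e (Ioc 0 a) := hec.integrableOn_Ioc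
  have hsplit : ∫ u in Ioi (0:ℝ), e u * f u
      = (∫ u in Ioc 0 a, e u * f u) + ∫ u in Ioi a, e u * f u := by
    rw [← Ioc_union_Ioi_eq_Ioi ha0.le]
    exact setIntegral_union (Ioc_disjoint_Ioi le_rfl) measurableSet_Ioi
      (hef.mono_set Ioc_subset_Ioi_self) (hef.mono_set hsub)
  have hhead : ∫ u in Ioc 0 a, e u * f u = (∫ u in Ioc 0 a, e u * (f u - 1)) + ∫ u in Ioc 0 a, e u := by
    rw [← integral_add _ hie]
    · congr 1; ext u; ring
    · have := (hef.mono_set Ioc_subset_Ioi_self).sub hie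
      refine this.congr (Eventually.of_forall fun u => ?_)
      simp; ring
  have hee : ∫ u in Ioc 0 a, e u = (1 - e a) / D := by
    rw [← intervalIntegral.integral_of_le ha0.le]
    have := intervalIntegral.integral_eq_sub_of_hasDerivAt (f := fun u => e u / (-D)) (f' := e) (a := 0) (b := a)
      (fun u _ => by
        refine ((hed u).div_const (-D)).congr_deriv ?_
        field_simp) (hec.intervalIntegrable _ _)
    rw [this]
    have : e 0 = 1 := by simp [he]
    rw [this]; field_simp; ring
  have hb : ‖∫ u in Ioc 0 a, e u * (f u - 1)‖ ≤ K * a ^ Y * a := by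
    have := norm_setIntegral_le_of_norm_le_const (μ := volume) (s := Ioc 0 a)
      (f := fun u => e u * (f u - 1)) (C := K * a ^ Y) (by simp) (fun u hu => by
        rw [norm_mul, hen, one_mul]
        refine (hb0 u hu.1).trans ?_
        have := hu.1.le
        have := hu.2
        gcongr)
    simpa [Real.volume_real_Ioc, ha0.le] using this
  have key : ∫ u in Ioi (0:ℝ), e u * f u = 1 / D + ((∫ u in Ioc 0 a, e u * (f u - 1))
      + e a * ((f a - 1) / D) + e a * (f1 a / D ^ 2) + e a * (f2 a / D ^ 3)
      + (∫ u in Ioi a, e u * f3 u) / D ^ 3) := by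
    have : ∫ u in Ioi a, e u * f u = H a + (∫ u in Ioi a, e u * f3 u) / D ^ 3 := by
      linear_combination -htail
    rw [hsplit, hhead, hee, this]
    simp only [hH]; ring
  rw [key, Complex.add_re, hDre, zero_add]
  refine (Complex.abs_re_le_norm _).trans ?_
  have hpow : |x| ^ (-1 - Y) = a ^ Y * a := by
    rw [ha, Real.inv_rpow hxa.le, show -1 - Y = -(Y + 1) by ring, Real.rpow_neg hxa.le,
      Real.rpow_add_one hxa.ne', mul_inv]
  have haY : a ^ (Y - 2) = a ^ Y / a ^ 2 := by
    rw [Real.rpow_sub ha0]; norm_cast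
  have t1 : ‖e a * ((f a - 1) / D)‖ ≤ K * a ^ Y * a := by
    rw [norm_mul, hen, one_mul, norm_div, hDa, div_inv_eq_mul]
    gcongr; exact hb0 a ha0
  have t2 : ‖e a * (f1 a / D ^ 2)‖ ≤ K * a ^ Y * a := by
    rw [norm_mul, hen, one_mul, norm_div, norm_pow, hDa, inv_pow, div_inv_eq_mul]
    calc _ ≤ K * a ^ Y / a * a ^ 2 := by gcongr; exact hb1 a ha0
      _ = _ := by field_simp
  have t3 : ‖e a * (f2 a / D ^ 3)‖ ≤ K * a ^ Y * a := by
    rw [norm_mul, hen, one_mul, norm_div, norm_pow, hDa, inv_pow, div_inv_eq_mul]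
    calc _ ≤ K * a ^ Y / a ^ 2 * a ^ 3 := by gcongr; exact hb2 a ha0
      _ = _ := by field_simp
  have t4 : ‖(∫ u in Ioi a, e u * f3 u) / D ^ 3‖ ≤ K / (2 - Y) * a ^ Y * a := by
    rw [norm_div, norm_pow, hDa, inv_pow, div_inv_eq_mul]
    calc _ ≤ K * (a ^ (Y - 2) / (2 - Y)) * a ^ 3 := by gcongr
      _ = _ := by
        have : 2 - Y ≠ 0 := by linarith
        rw [haY]; field_simp
  rw [hpow]
  calc _ ≤ K * a ^ Y * a + K * a ^ Y * a + K * a ^ Y * a + K * a ^ Y * a + K / (2 - Y) * a ^ Y * a :=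
        (norm_add_le _ _).trans (add_le_add ((norm_add_le _ _).trans (add_le_add
          ((norm_add_le _ _).trans (add_le_add ((norm_add_le _ _).trans (add_le_add hb t1)) t2)) t3)) t4)
    _ = _ := by ring

lemma half_line (Y : ℝ) (hY1 : 1 < Y) (hY2 : Y < 2) (c : ℂ) (hc : 0 < c.re) :
    ∃ C : ℝ, 0 < C ∧ ∀ x : ℝ, x ≠ 0 →
      |(∫ u in Ioi (0:ℝ), Complex.exp (-(Complex.I * x * u)) *
        Complex.exp (-(c * (u ^ Y : ℝ)))).re| ≤ C * |x| ^ (-1 - Y) := by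
  obtain ⟨M, hM, hMb⟩ := aux_exp_bound c.re hc
  set f : ℝ → ℂ := fun u => Complex.exp (-(c * (u ^ Y : ℝ))) with hf
  set f1 : ℝ → ℂ := fun u => -(c * Y) * (u ^ Y : ℝ) / u * f u with hf1
  set f2 : ℝ → ℂ := fun u => (c ^ 2 * Y ^ 2 * (u ^ Y : ℝ) ^ 2 - c * Y * (Y - 1) * (u ^ Y : ℝ))
    / u ^ 2 * f u with hf2
  set f3 : ℝ → ℂ := fun u => (-(c ^ 3 * Y ^ 3 * (u ^ Y : ℝ) ^ 3)
    + 3 * c ^ 2 * Y ^ 2 * (Y - 1) * (u ^ Y : ℝ) ^ 2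
    - c * Y * (Y - 1) * (Y - 2) * (u ^ Y : ℝ)) / u ^ 3 * f u with hf3
  have hfn : ∀ u : ℝ, ‖f u‖ = Real.exp (-(c.re * u ^ Y)) := by
    intro u; simp only [hf]; rw [Complex.norm_exp]; simp
  have hm : ∀ u : ℝ, 0 < u → HasDerivAt (fun u : ℝ => ((u ^ Y : ℝ) : ℂ))
      (Y * (u ^ Y : ℝ) / u) u := by
    intro u hu
    have := (Real.hasDerivAt_rpow_const (x := u) (p := Y) (Or.inl hu.ne')).ofReal_comp
    convert this using 1
    rw [Real.rpow_sub_one hu.ne']; push_cast; ring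
  have hid : ∀ u : ℝ, HasDerivAt (fun u : ℝ => (u : ℂ)) 1 u := fun u => by
    simpa using (hasDerivAt_id u).ofReal_comp
  have hd0 : ∀ u : ℝ, 0 < u → HasDerivAt f (f1 u) u := by
    intro u hu
    have := (((hm u hu).const_mul c).neg).cexp
    refine HasDerivAt.congr_deriv (f := f) this ?_
    simp only [hf1, hf, Pi.neg_apply]; ring
  have hd1 : ∀ u : ℝ, 0 < u → HasDerivAt f1 (f2 u) u := by
    intro u hu
    have hu' : (u : ℂ) ≠ 0 := by exact_mod_cast hu.ne'
    have := (((hm u hu).const_mul (-(c * Y))).div (hid u) hu').mul (hd0 u hu)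
    refine HasDerivAt.congr_deriv (f := f1) this ?_
    simp only [hf2, hf1, Pi.div_apply]; field_simp; ring
  have hd2 : ∀ u : ℝ, 0 < u → HasDerivAt f2 (f3 u) u := by
    intro u hu
    have hu' : (u : ℂ) ≠ 0 := by exact_mod_cast hu.ne'
    have := ((((hm u hu).pow 2).const_mul (c ^ 2 * Y ^ 2)).sub
      ((hm u hu).const_mul (c * Y * (Y - 1)))).div ((hid u).pow 2) (pow_ne_zero 2 hu') |>.mul (hd0 u hu)
    refine HasDerivAt.congr_deriv (f := f2) this ?_
    simp only [hf3, hf2, hf1, Pi.div_apply, Pi.pow_apply, Pi.sub_apply]; field_simp; push_cast; ring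
  -- bounds
  have hmb : ∀ u : ℝ, 0 ≤ u → ∀ n : ℕ, n ≤ 3 → (u ^ Y) ^ n * ‖f u‖ ≤ M := by
    intro u hu n hn
    have h0 : 0 ≤ u ^ Y := by positivity
    rw [hfn]
    refine le_trans ?_ (hMb _ h0)
    gcongr
    calc (u ^ Y) ^ n ≤ (1 + u ^ Y) ^ n := by gcongr; linarith
      _ ≤ _ := pow_le_pow_right₀ (by linarith) hn
  have hnw : ∀ u : ℝ, 0 ≤ u → ‖((u ^ Y : ℝ) : ℂ)‖ = u ^ Y := by
    intro u hu; rw [Complex.norm_real, Real.norm_of_nonneg (by positivity)]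
  have hnu : ∀ u : ℝ, 0 ≤ u → ‖(u : ℂ)‖ = u := by
    intro u hu; rw [Complex.norm_real, Real.norm_of_nonneg (by positivity)]
  set K : ℝ := M * (‖c * Y‖ + ‖c ^ 2 * (Y:ℂ) ^ 2‖ + ‖c * Y * (Y - 1)‖ + ‖c ^ 3 * (Y:ℂ) ^ 3‖
    + ‖3 * c ^ 2 * (Y:ℂ) ^ 2 * (Y - 1)‖ + ‖c * Y * (Y - 1) * (Y - 2)‖) with hK
  have hK0 : 0 ≤ K := by positivity
  have hb1 : ∀ u : ℝ, 0 < u → ‖f1 u‖ ≤ K * u ^ Y / u := by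
    intro u hu
    have e0 := hmb u hu.le 0 (by norm_num)
    simp only [hf1]
    rw [norm_mul, norm_div, norm_mul, norm_neg, hnw u hu.le, hnu u hu.le]
    rw [div_mul_eq_mul_div]
    refine div_le_div_of_nonneg_right ?_ (by positivity)
    rw [pow_zero, one_mul] at e0
    calc ‖c * Y‖ * u ^ Y * ‖f u‖ ≤ ‖c * Y‖ * u ^ Y * M := by gcongr
      _ = (M * ‖c * Y‖) * u ^ Y := by ring
      _ ≤ _ := by
        refine mul_le_mul_of_nonneg_right ?_ (by positivity)
        rw [hK]; refine mul_le_mul_of_nonneg_left ?_ hM.le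
        have := norm_nonneg (c ^ 2 * (Y:ℂ) ^ 2)
        have := norm_nonneg (c * Y * (Y - 1))
        have := norm_nonneg (c ^ 3 * (Y:ℂ) ^ 3)
        have := norm_nonneg (3 * c ^ 2 * (Y:ℂ) ^ 2 * (Y - 1))
        have := norm_nonneg (c * Y * (Y - 1) * (Y - 2))
        linarith
  have hb2 : ∀ u : ℝ, 0 < u → ‖f2 u‖ ≤ K * u ^ Y / u ^ 2 := by
    intro u hu
    have e0 := hmb u hu.le 0 (by norm_num)
    have e1 := hmb u hu.le 1 (by norm_num)
    simp only [hf2]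
    rw [norm_mul, norm_div, norm_pow, hnu u hu.le, div_mul_eq_mul_div]
    refine div_le_div_of_nonneg_right ?_ (by positivity)
    rw [pow_zero, one_mul] at e0
    rw [pow_one] at e1
    calc _ ≤ (‖c ^ 2 * (Y:ℂ) ^ 2‖ * (u ^ Y) ^ 2 + ‖c * Y * (Y - 1)‖ * u ^ Y) * ‖f u‖ := by
          gcongr
          refine (norm_sub_le _ _).trans (le_of_eq ?_)
          rw [norm_mul, norm_pow, norm_mul _ (((u ^ Y : ℝ) : ℂ)), hnw u hu.le]
      _ = ‖c ^ 2 * (Y:ℂ) ^ 2‖ * u ^ Y * (u ^ Y * ‖f u‖) + ‖c * Y * (Y - 1)‖ * u ^ Y * ‖f u‖ := by ring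
      _ ≤ ‖c ^ 2 * (Y:ℂ) ^ 2‖ * u ^ Y * M + ‖c * Y * (Y - 1)‖ * u ^ Y * M := by gcongr
      _ = (M * (‖c ^ 2 * (Y:ℂ) ^ 2‖ + ‖c * Y * (Y - 1)‖)) * u ^ Y := by ring
      _ ≤ _ := by
        refine mul_le_mul_of_nonneg_right ?_ (by positivity)
        rw [hK]; refine mul_le_mul_of_nonneg_left ?_ hM.le
        have := norm_nonneg (c * Y)
        have := norm_nonneg (c ^ 3 * (Y:ℂ) ^ 3)
        have := norm_nonneg (3 * c ^ 2 * (Y:ℂ) ^ 2 * (Y - 1))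
        have := norm_nonneg (c * Y * (Y - 1) * (Y - 2))
        linarith
  have hb3 : ∀ u : ℝ, 0 < u → ‖f3 u‖ ≤ K * u ^ Y / u ^ 3 := by
    intro u hu
    have e0 := hmb u hu.le 0 (by norm_num)
    have e1 := hmb u hu.le 1 (by norm_num)
    have e2 := hmb u hu.le 2 (by norm_num)
    simp only [hf3]
    rw [norm_mul, norm_div, norm_pow, hnu u hu.le, div_mul_eq_mul_div]
    refine div_le_div_of_nonneg_right ?_ (by positivity)
    rw [pow_zero, one_mul] at e0
    rw [pow_one] at e1
    calc _ ≤ (‖c ^ 3 * (Y:ℂ) ^ 3‖ * (u ^ Y) ^ 3 + ‖3 * c ^ 2 * (Y:ℂ) ^ 2 * (Y - 1)‖ * (u ^ Y) ^ 2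
              + ‖c * Y * (Y - 1) * (Y - 2)‖ * u ^ Y) * ‖f u‖ := by
          gcongr
          refine (norm_sub_le _ _).trans (le_trans (add_le_add_left (norm_add_le _ _) _) (le_of_eq ?_))
          rw [norm_neg, norm_mul, norm_pow, norm_mul _ (((u ^ Y : ℝ) : ℂ) ^ 2), norm_pow,
            norm_mul _ (((u ^ Y : ℝ) : ℂ)), hnw u hu.le]
      _ = ‖c ^ 3 * (Y:ℂ) ^ 3‖ * u ^ Y * ((u ^ Y) ^ 2 * ‖f u‖)
          + ‖3 * c ^ 2 * (Y:ℂ) ^ 2 * (Y - 1)‖ * u ^ Y * (u ^ Y * ‖f u‖)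
          + ‖c * Y * (Y - 1) * (Y - 2)‖ * u ^ Y * ‖f u‖ := by ring
      _ ≤ ‖c ^ 3 * (Y:ℂ) ^ 3‖ * u ^ Y * M
          + ‖3 * c ^ 2 * (Y:ℂ) ^ 2 * (Y - 1)‖ * u ^ Y * M
          + ‖c * Y * (Y - 1) * (Y - 2)‖ * u ^ Y * M := by gcongr
      _ = (M * (‖c ^ 3 * (Y:ℂ) ^ 3‖ + ‖3 * c ^ 2 * (Y:ℂ) ^ 2 * (Y - 1)‖
          + ‖c * Y * (Y - 1) * (Y - 2)‖)) * u ^ Y := by ring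
      _ ≤ _ := by
        refine mul_le_mul_of_nonneg_right ?_ (by positivity)
        rw [hK]; refine mul_le_mul_of_nonneg_left ?_ hM.le
        have := norm_nonneg (c * Y)
        have := norm_nonneg (c ^ 2 * (Y:ℂ) ^ 2)
        have := norm_nonneg (c * Y * (Y - 1))
        linarith
  have hfint : IntegrableOn f (Ioi 0) := by
    have h := integrableOn_rpow_mul_exp_neg_mul_rpow (p := Y) (s := 0) (b := c.re)
      (by norm_num) (by linarith) hc
    refine Integrable.mono' h ?_ ?_
    · refine ContinuousOn.aestronglyMeasurable (fun u hu => ?_) measurableSet_Ioi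
      exact (hd0 u hu).continuousAt.continuousWithinAt
    · refine Eventually.of_forall fun u => ?_
      rw [hfn]; simp
  have ht0 : Tendsto f atTop (𝓝 0) := by
    have h0 : Tendsto (fun u : ℝ => M * u ^ (-Y)) atTop (𝓝 0) := by
      simpa using (tendsto_rpow_neg_atTop (show 0 < Y by linarith)).const_mul M
    refine squeeze_zero_norm' ?_ h0
    filter_upwards [eventually_gt_atTop 0] with u hu
    have := hmb u hu.le 1 (by norm_num)
    rw [Real.rpow_neg hu.le, ← div_eq_mul_inv, le_div_iff₀ (by positivity)]
    linarith
  have ht1 : Tendsto f1 atTop (𝓝 0) := by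
    have h0 : Tendsto (fun u : ℝ => ‖c * Y‖ * M * u⁻¹) atTop (𝓝 0) := by
      simpa using tendsto_inv_atTop_zero.const_mul (‖c * (Y:ℂ)‖ * M)
    refine squeeze_zero_norm' ?_ h0
    filter_upwards [eventually_gt_atTop 0] with u hu
    have := hmb u hu.le 1 (by norm_num)
    rw [pow_one] at this
    simp only [hf1]
    rw [norm_mul, norm_div, norm_mul, norm_neg, hnw u hu.le, hnu u hu.le]
    calc _ = ‖c * Y‖ * (u ^ Y * ‖f u‖) * u⁻¹ := by ring
      _ ≤ _ := by gcongr
  have hc3 : ContinuousOn f3 (Ioi 0) := by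
    intro u hu
    have hu' : (u : ℂ) ≠ 0 := by exact_mod_cast (ne_of_gt hu)
    have c1 := (hm u hu).continuousAt
    have c2 := (hid u).continuousAt
    have c3 := (hd0 u hu).continuousAt
    refine ContinuousAt.continuousWithinAt ?_
    refine ContinuousAt.mul (ContinuousAt.div ?_ (c2.pow 3) (pow_ne_zero 3 hu')) c3
    exact (((c1.pow 3).const_mul _).neg.add ((c1.pow 2).const_mul _)).sub (c1.const_mul _)
  have hKK : K ≤ K + 2 * ‖c‖ := by have := norm_nonneg c; linarith
  have hb0 : ∀ u : ℝ, 0 < u → ‖f u - 1‖ ≤ (K + 2 * ‖c‖) * u ^ Y := by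
    intro u hu
    have h0 : 0 ≤ u ^ Y := by positivity
    refine (aux_sub_one _ ?_).trans ?_
    · simp; positivity
    · rw [norm_neg, norm_mul, hnw u hu.le]; nlinarith
  have h2Y : 0 < 2 - Y := by linarith
  refine ⟨4 * (K + 2 * ‖c‖) + (K + 2 * ‖c‖) / (2 - Y), ?_, ?_⟩
  · have : 0 < ‖c‖ := norm_pos_iff.2 (by rintro rfl; simp at hc)
    positivity
  intro x hx
  refine half_line_ibp Y (K + 2 * ‖c‖) hY1 hY2 (by positivity) f f1 f2 f3 hd0 hd1 hd2 hb0
    (fun u hu => (hb1 u hu).trans ?_) (fun u hu => (hb2 u hu).trans ?_)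
    (fun u hu => (hb3 u hu).trans ?_) hfint hc3 ht0 ht1 x hx
  all_goals gcongr

open scoped FourierTransform in
lemma density_bound (Y C : ℝ) (hY1 : 1 < Y) (F : ℝ → ℂ) (hFc : Continuous F)
    (hFconj : ∀ v, F (-v) = (starRingEnd ℂ) (F v)) (hFi : IntegrableOn F (Ioi 0))
    (hF : ∀ x : ℝ, x ≠ 0 →
      |(∫ u in Ioi (0:ℝ), Complex.exp (-(Complex.I * x * u)) * F u).re| ≤ C * |x| ^ (-1 - Y))
    (μ : Measure ℝ) [IsProbabilityMeasure μ]
    (hμ : ∀ v : ℝ, ∫ x, Complex.exp (Complex.I * (2 * π * v) * x) ∂μ = F v) :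
    μ ≤ volume.withDensity (fun x => ENNReal.ofReal (2 * C * |2 * π * x| ^ (-1 - Y))) := by
  have hIntg : Integrable F := by
    have h2 : IntegrableOn F (Iic 0) := by
      rw [← integrableOn_Ici_iff_integrableOn_Ioi] at hFi
      have h3 : IntegrableOn (fun v => (starRingEnd ℂ) (F v)) (Ici 0) :=
        (Complex.conjLIE.toContinuousLinearEquiv.toContinuousLinearMap).integrable_comp hFi
      have h4 : IntegrableOn (fun v => F (-v)) (Ici 0) := by simpa only [hFconj] using h3
      simpa using h4.comp_neg
    rw [← integrableOn_univ, ← Iic_union_Ioi (a := (0:ℝ))]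
    exact h2.union hFi
  -- the density
  set q : ℝ → ℝ := fun w => 2 * (∫ u in Ioi (0:ℝ), Complex.exp (-(Complex.I * (2 * π * w : ℝ) * u)) * F u).re with hq
  have hFq : ∀ w, 𝓕 F w = (q w : ℂ) := by
    intro w
    rw [Real.fourier_real_eq_integral_exp_smul]
    set g : ℝ → ℂ := fun u => Complex.exp (-(Complex.I * (2 * π * w : ℝ) * u)) * F u with hg
    have h1 : (∫ v : ℝ, Complex.exp (↑(-2 * π * v * w) * Complex.I) • F v) = ∫ v, g v := by
      congr 1; ext v; simp only [hg, smul_eq_mul]; congr 2; push_cast; ring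
    have hgi : Integrable g := by
      refine hIntg.bdd_mul (c := 1) (by fun_prop) (Eventually.of_forall fun u => ?_)
      rw [Complex.norm_exp]; simp
    have hgc : ∀ v, g (-v) = (starRingEnd ℂ) (g v) := by
      intro v
      simp only [hg, hFconj, map_mul, ← Complex.exp_conj, map_neg, Complex.conj_I, Complex.conj_ofReal]
      congr 2; push_cast; ring
    rw [h1, ← intervalIntegral.integral_Iic_add_Ioi (b := (0:ℝ)) hgi.integrableOn hgi.integrableOn]
    have h2 : ∫ v in Iic (0:ℝ), g v = (starRingEnd ℂ) (∫ v in Ioi (0:ℝ), g v) := by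
      rw [← integral_conj, ← neg_zero, ← integral_comp_neg_Ioi, neg_zero]
      simp only [hgc]
    rw [h2, add_comm, Complex.add_conj]
  have hqb : ∀ w, w ≠ 0 → |q w| ≤ 2 * C * |2 * π * w| ^ (-1 - Y) := by
    intro w hw
    have := hF (2 * π * w) (by positivity)
    simp only [hq]
    rw [abs_mul, abs_two]; linarith
  have hqc' : Continuous (𝓕 F) := by
    exact VectorFourier.fourierIntegral_continuous Real.continuous_fourierChar (by fun_prop) hIntg
  have hqc : Continuous q := by
    have : q = fun w => (𝓕 F w).re := by ext w; rw [hFq]; simp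
    rw [this]; exact Complex.continuous_re.comp hqc'
  have hqi : Integrable q := by
    have h0 : IntegrableOn (fun t : ℝ => 2 * C * (2 * π) ^ (-1 - Y) * t ^ (-1 - Y)) (Ioi 1) :=
      (integrableOn_Ioi_rpow_of_lt (by linarith) zero_lt_one).const_mul _
    have hp : ∀ t : ℝ, 0 < t → 2 * C * |2 * π * t| ^ (-1 - Y) = 2 * C * (2 * π) ^ (-1 - Y) * t ^ (-1 - Y) := by
      intro t ht
      rw [abs_of_pos (by positivity), Real.mul_rpow (by positivity) ht.le]; ring
    have h1 : IntegrableOn q (Ioi 1) := by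
      refine Integrable.mono' h0 hqc.aestronglyMeasurable ?_
      refine (ae_restrict_iff' measurableSet_Ioi).2 (Eventually.of_forall fun t ht => ?_)
      have ht : 1 < t := ht
      rw [← hp t (by linarith)]; exact hqb t (by linarith)
    have h1' : IntegrableOn (fun t => q (-t)) (Ioi 1) := by
      refine Integrable.mono' h0 (hqc.comp continuous_neg).aestronglyMeasurable ?_
      refine (ae_restrict_iff' measurableSet_Ioi).2 (Eventually.of_forall fun t ht => ?_)
      have ht : 1 < t := ht
      rw [← hp t (by linarith)]; simpa using hqb (-t) (by linarith)
    have h2 : IntegrableOn q (Iio (-1)) := by simpa using h1'.comp_neg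
    have h3 : IntegrableOn q (Icc (-1) 1) := hqc.continuousOn.integrableOn_Icc
    rw [← integrableOn_univ]
    refine ((h2.union h3).union h1).mono_set ?_
    intro t _
    rcases lt_or_ge t (-1) with h | h
    · exact Or.inl (Or.inl h)
    · rcases le_or_gt t 1 with h' | h'
      · exact Or.inl (Or.inr ⟨h, h'⟩)
      · exact Or.inr h'
  have hFqi : Integrable (𝓕 F) := by
    have : 𝓕 F = fun w => (q w : ℂ) := funext hFq
    rw [this]; exact hqi.ofReal
  have hinv := Continuous.fourierInv_fourier_eq hFc hIntg hFqi
  -- positive and negative parts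
  set np : Measure ℝ := volume.withDensity (fun x => ENNReal.ofReal (q x)) with hnp
  set nm : Measure ℝ := volume.withDensity (fun x => ENNReal.ofReal (-q x)) with hnm
  have : IsFiniteMeasure np := isFiniteMeasure_withDensity_ofReal hqi.2
  have : IsFiniteMeasure nm := isFiniteMeasure_withDensity_ofReal hqi.neg.2
  have hmain : μ + nm = np := by
    refine Measure.ext_of_charFun (funext fun t => ?_)
    have hbi : ∀ (ρ : Measure ℝ) [IsFiniteMeasure ρ], Integrable (fun x : ℝ => Complex.exp (t * x * Complex.I)) ρ := by
      intro ρ _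
      refine Integrable.mono' (integrable_const (1:ℝ)) (by fun_prop) (Eventually.of_forall fun x => ?_)
      rw [Complex.norm_exp]; simp
    simp only [charFun_apply_real]
    rw [integral_add_measure (hbi _) (hbi _)]
    have e0 : ∫ x, Complex.exp (t * x * Complex.I) ∂μ = F (t / (2 * π)) := by
      rw [← hμ]; congr 1; ext x; congr 1; push_cast; field_simp
    have ep : ∫ x, Complex.exp (t * x * Complex.I) ∂np
        = ∫ x, (max (q x) 0 : ℝ) • Complex.exp (t * x * Complex.I) := by
      rw [hnp, integral_withDensity_eq_integral_toReal_smul (by fun_prop) (by simp)]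
      simp only [ENNReal.toReal_ofReal']
    have em : ∫ x, Complex.exp (t * x * Complex.I) ∂nm
        = ∫ x, (max (-q x) 0 : ℝ) • Complex.exp (t * x * Complex.I) := by
      rw [hnm, integral_withDensity_eq_integral_toReal_smul (by fun_prop) (by simp)]
      simp only [ENNReal.toReal_ofReal']
    have ef : F (t / (2 * π)) = ∫ x, (q x : ℝ) • Complex.exp (t * x * Complex.I) := by
      rw [← congrFun hinv (t / (2 * π)), Real.fourierInv_eq']
      congr 1; ext x
      rw [hFq, smul_eq_mul, Complex.real_smul, mul_comm]
      congr 2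
      simp only [RCLike.inner_apply, conj_trivial]
      push_cast; field_simp
    have hmul : ∀ r : ℝ → ℝ, Integrable r → Integrable (fun x => r x • Complex.exp (t * x * Complex.I)) := by
      intro r hr
      have := hr.ofReal (𝕜 := ℂ)
      refine (this.mul_bdd (c := 1) (g := fun x : ℝ => Complex.exp (t * x * Complex.I)) (by fun_prop) (Eventually.of_forall fun x => ?_)).congr ?_
      · rw [Complex.norm_exp]; simp
      · exact Eventually.of_forall fun x => by simp
    rw [e0, ef, ep, em, ← integral_add (hmul _ hqi) (hmul (fun x => max (-q x) 0) hqi.neg.pos_part)]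
    congr 1; ext x
    rw [← add_smul]; congr 1
    rcases le_total (q x) 0 with h | h
    · rw [max_eq_left (by linarith), max_eq_right h]; ring
    · rw [max_eq_right (by linarith), max_eq_left h]; ring
  calc μ ≤ μ + nm := Measure.le_add_right le_rfl
    _ = np := hmain
    _ ≤ _ := by
      refine withDensity_mono ?_
      have : ∀ᵐ x : ℝ, x ≠ 0 := by simp [ae_iff]
      filter_upwards [this] with x hx
      exact ENNReal.ofReal_le_ofReal ((le_abs_self _).trans (hqb x hx))

/-- pointwise domination in the far region -/
lemma pointwise_bound (Y σ : ℝ) (hY1 : 1 < Y) (hY2 : Y < 2) (hσ : 0 < σ) (k : ℕ) :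
    ∃ K : ℝ, 0 < K ∧ ∀ h ε z : ℝ, 0 < h → 0 < ε → 1 ≤ ε / √h → h / ε < |z| →
      |z| ^ k * |z| ^ (-1 - Y) * Real.exp (-((ε + z) ^ 2 / (4 * σ ^ 2 * h)))
        ≤ K * (ε ^ k * ε ^ (-1 - Y)) := by
  refine ⟨(16 * σ ^ 2) ^ 3 * 6 + 8 * Real.exp (k ^ 2 * σ ^ 2), by positivity, ?_⟩
  intro h ε z hh hε ha hz
  have hsq : 0 < √h := Real.sqrt_pos.2 hh
  have hss : √h ^ 2 = h := Real.sq_sqrt hh.le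
  set a := ε / √h with hadef
  have ha0 : 0 < a := by positivity
  have ha2 : a ^ 2 = ε ^ 2 / h := by rw [hadef, div_pow, hss]
  have hz0 : 0 < |z| := lt_trans (by positivity) hz
  set r := |z| / ε with hr
  have hr0 : 0 < r := by positivity
  have hzr : |z| = r * ε := by rw [hr]; field_simp
  have hra : 1 / a ^ 2 < r := by
    rw [ha2, hr, one_div_div, div_lt_div_iff₀ (by positivity) hε]
    rw [div_lt_iff₀ hε] at hz
    nlinarith
  -- exponent comparison
  have hexp : a ^ 2 * (1 - r) ^ 2 / (4 * σ ^ 2) ≤ (ε + z) ^ 2 / (4 * σ ^ 2 * h) := by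
    rw [ha2]
    have h1 : (ε * (1 - r)) ^ 2 ≤ (ε + z) ^ 2 := by
      have : ε * (1 - r) = ε - |z| := by rw [hzr]; ring
      rw [this]
      have h2 : -|z| ≤ z := neg_abs_le z
      nlinarith [sq_abs z]
    calc ε ^ 2 / h * (1 - r) ^ 2 / (4 * σ ^ 2) = (ε * (1 - r)) ^ 2 / (4 * σ ^ 2 * h) := by
          field_simp
      _ ≤ _ := by gcongr
  have hmain : r ^ k * r ^ (-1 - Y) * Real.exp (-(a ^ 2 * (1 - r) ^ 2 / (4 * σ ^ 2)))
      ≤ (16 * σ ^ 2) ^ 3 * 6 + 8 * Real.exp (k ^ 2 * σ ^ 2) := by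
    rcases lt_or_ge r (1 / 2) with hlt | hge
    · have e1 : r ^ k ≤ 1 := pow_le_one₀ hr0.le (by linarith)
      have e2 : r ^ (-1 - Y) ≤ (a ^ 2) ^ 3 := by
        calc r ^ (-1 - Y) ≤ r ^ (-3 : ℝ) :=
              Real.rpow_le_rpow_of_exponent_ge hr0 (by linarith) (by linarith)
          _ = (1 / r) ^ 3 := by
              rw [Real.rpow_neg hr0.le, one_div, inv_pow]; norm_cast
          _ ≤ (a ^ 2) ^ 3 := by
              gcongr
              rw [div_le_iff₀ hr0]
              rw [div_lt_iff₀ (by positivity)] at hra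
              linarith
      have e3 : Real.exp (-(a ^ 2 * (1 - r) ^ 2 / (4 * σ ^ 2))) ≤ Real.exp (-(a ^ 2 / (16 * σ ^ 2))) := by
        apply Real.exp_le_exp.2
        rw [neg_le_neg_iff, div_le_div_iff₀ (by positivity) (by positivity)]
        have : (1/4 : ℝ) ≤ (1 - r) ^ 2 := by nlinarith
        have h3 : 0 < a ^ 2 * σ ^ 2 := by positivity
        nlinarith
      have e4 : (a ^ 2) ^ 3 * Real.exp (-(a ^ 2 / (16 * σ ^ 2))) ≤ (16 * σ ^ 2) ^ 3 * 6 := by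
        have := Real.pow_div_factorial_le_exp (a ^ 2 / (16 * σ ^ 2)) (by positivity) 3
        rw [Real.exp_neg, ← div_eq_mul_inv, div_le_iff₀ (Real.exp_pos _)]
        calc (a ^ 2) ^ 3 = (16 * σ ^ 2) ^ 3 * 6 * ((a ^ 2 / (16 * σ ^ 2)) ^ 3 / (Nat.factorial 3 : ℕ)) := by
              simp [Nat.factorial]; field_simp
          _ ≤ _ := by gcongr
      calc _ ≤ 1 * (a ^ 2) ^ 3 * Real.exp (-(a ^ 2 / (16 * σ ^ 2))) := by gcongr
        _ ≤ (16 * σ ^ 2) ^ 3 * 6 := by rw [one_mul]; exact e4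
        _ ≤ _ := by have := Real.exp_pos (k ^ 2 * σ ^ 2); linarith
    · have e2 : r ^ (-1 - Y) ≤ 8 := by
        calc r ^ (-1 - Y) ≤ (1/2 : ℝ) ^ (-1 - Y) :=
              Real.rpow_le_rpow_of_nonpos (by norm_num) hge (by linarith)
          _ ≤ (1/2 : ℝ) ^ (-3 : ℝ) :=
              Real.rpow_le_rpow_of_exponent_ge (by norm_num) (by norm_num) (by linarith)
          _ = 8 := by rw [Real.rpow_neg (by norm_num)]; norm_num
      have e1 : r ^ k ≤ Real.exp (k * (r - 1)) := by
        calc r ^ k ≤ (Real.exp (r - 1)) ^ k := by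
              gcongr; have := Real.add_one_le_exp (r - 1); linarith
          _ = _ := by rw [← Real.exp_nat_mul]
      have e3 : Real.exp (-(a ^ 2 * (1 - r) ^ 2 / (4 * σ ^ 2))) ≤ Real.exp (-((r - 1) ^ 2 / (4 * σ ^ 2))) := by
        apply Real.exp_le_exp.2
        rw [neg_le_neg_iff]
        gcongr
        have : 1 ≤ a ^ 2 := one_le_pow₀ ha
        nlinarith [sq_nonneg (1 - r)]
      calc _ ≤ Real.exp (k * (r - 1)) * 8 * Real.exp (-((r - 1) ^ 2 / (4 * σ ^ 2))) := by gcongr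
        _ = 8 * Real.exp (k * (r - 1) + -((r - 1) ^ 2 / (4 * σ ^ 2))) := by rw [Real.exp_add]; ring
        _ ≤ 8 * Real.exp (k ^ 2 * σ ^ 2) := by
            gcongr
            have : k ^ 2 * σ ^ 2 - (k * (r - 1) + -((r - 1) ^ 2 / (4 * σ ^ 2)))
                = (k * σ - (r - 1) / (2 * σ)) ^ 2 := by field_simp; ring
            nlinarith [sq_nonneg (k * σ - (r - 1) / (2 * σ))]
        _ ≤ _ := by have : 0 < (16 * σ ^ 2) ^ 3 * 6 := by positivity
                    linarith
  rw [hzr, mul_pow, Real.mul_rpow hr0.le hε.le]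
  calc _ ≤ r ^ k * ε ^ k * (r ^ (-1 - Y) * ε ^ (-1 - Y)) * Real.exp (-(a ^ 2 * (1 - r) ^ 2 / (4 * σ ^ 2))) := by
        gcongr
    _ = (r ^ k * r ^ (-1 - Y) * Real.exp (-(a ^ 2 * (1 - r) ^ 2 / (4 * σ ^ 2)))) * (ε ^ k * ε ^ (-1 - Y)) := by ring
    _ ≤ _ := by gcongr

lemma gauss_affine (b α β : ℝ) (hb : 0 < b) (hα : 0 < α) :
    ∫⁻ x : ℝ, ENNReal.ofReal (Real.exp (-b * (α * x + β) ^ 2)) = ENNReal.ofReal (α⁻¹ * √(π / b)) := by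
  have h1 : Integrable (fun x : ℝ => Real.exp (-b * (α * x + β) ^ 2)) := by
    have h2 := (integrable_exp_neg_mul_sq hb).comp_add_right β
    exact h2.comp_mul_left' hα.ne'
  rw [← ofReal_integral_eq_lintegral_ofReal h1 (Eventually.of_forall fun x => (Real.exp_pos _).le)]
  congr 1
  rw [Measure.integral_comp_mul_left (fun y => Real.exp (-b * (y + β) ^ 2)) α,
    integral_add_right_eq_self (fun y => Real.exp (-b * y ^ 2)), integral_gaussian,
    abs_of_pos (by positivity)]
  rfl

lemma split_bigO (T A B : ℝ → ℝ) (K : ℝ) (hK : 0 ≤ K) (hA : ∀ h, 0 < h → 0 ≤ A h) (hB : ∀ h, 0 < h → 0 ≤ B h)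
    (hT : ∀ᶠ h in 𝓝[>] (0:ℝ), |T h| ≤ K * (A h + B h)) :
    ∃ R₁ R₂ : ℝ → ℝ, (∀ h : ℝ, 0 < h → T h = R₁ h + R₂ h) ∧
      R₁ =O[𝓝[>] (0 : ℝ)] A ∧ R₂ =O[𝓝[>] (0 : ℝ)] B := by
  classical
  refine ⟨fun h => if |T h| ≤ 2 * K * A h then T h else 0,
    fun h => if |T h| ≤ 2 * K * A h then 0 else T h, fun h _ => by dsimp only; split_ifs <;> simp, ?_, ?_⟩
  · refine IsBigO.of_bound (2 * K) ?_
    filter_upwards [self_mem_nhdsWithin] with h hh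
    have hA' := hA h hh
    rw [Real.norm_of_nonneg hA', Real.norm_eq_abs]
    split_ifs with hc
    · exact hc
    · simp; positivity
  · refine IsBigO.of_bound (2 * K) ?_
    filter_upwards [self_mem_nhdsWithin, hT] with h hh hT
    have hB' := hB h hh
    rw [Real.norm_of_nonneg hB', Real.norm_eq_abs]
    split_ifs with hc
    · simp; positivity
    · push Not at hc; linarith

lemma main_est {Ω : Type*} [MeasurableSpace Ω] (P : Measure Ω) [IsProbabilityMeasure P]
    (Y C σ : ℝ) (hY1 : 1 < Y) (hY2 : Y < 2) (hC : 0 < C) (hσ : 0 < σ)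
    (S : Ω → ℝ) (hSmeas : Measurable S)
    (hle : P.map S ≤ volume.withDensity (fun x => ENNReal.ofReal (C * |x| ^ (-1 - Y))))
    (γ₀ : ℝ) (k : ℕ) (ε : ℝ → ℝ) (hεpos : ∀ h : ℝ, 0 < h → 0 < ε h)
    (hε0 : Tendsto ε (𝓝[>] (0 : ℝ)) (𝓝 0))
    (hεsqrt : Tendsto (fun h => ε h / Real.sqrt h) (𝓝[>] (0 : ℝ)) atTop)
    (s : ℝ) (hs : s = 1 ∨ s = -1) :
    ∃ K : ℝ, 0 ≤ K ∧ ∀ᶠ h in 𝓝[>] (0:ℝ),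
      ∫⁻ ω, ENNReal.ofReal (|s * (h ^ (1 / Y) * S ω + γ₀ * h)| ^ k *
        Real.exp (-((ε h + s * (h ^ (1 / Y) * S ω + γ₀ * h)) ^ 2 / (2 * σ ^ 2 * h)))) ∂P
      ≤ ENNReal.ofReal (K * (h ^ ((3 : ℝ) / 2) * ε h ^ ((k : ℝ) - Y - 1)
          + ε h ^ k * Real.exp (-(ε h ^ 2) / (2 * σ ^ 2 * h)))) := by
  obtain ⟨K2, hK2, hpt⟩ := pointwise_bound Y σ hY1 hY2 hσ k
  set KA : ℝ := C * 2 ^ (1 + Y) * K2 * √(4 * π * σ ^ 2) with hKA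
  have hKA0 : 0 ≤ KA := by positivity
  set KB : ℝ := Real.exp (1 / σ ^ 2) with hKB
  have hKB0 : 0 < KB := Real.exp_pos _
  refine ⟨KA + KB, by positivity, ?_⟩
  have hs2 : s ^ 2 = 1 := by rcases hs with rfl | rfl <;> norm_num
  have hsabs : |s| = 1 := by rcases hs with rfl | rfl <;> norm_num
  have ev2 : ∀ᶠ h in 𝓝[>] (0:ℝ), |γ₀| * ε h < 1 / 2 := by
    have : Tendsto (fun h => |γ₀| * ε h) (𝓝[>] (0:ℝ)) (𝓝 0) := by simpa using hε0.const_mul |γ₀|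
    exact this.eventually_lt_const (by norm_num)
  filter_upwards [self_mem_nhdsWithin, hεsqrt.eventually_ge_atTop 1, ev2] with h hh ha hg
  have hh : 0 < h := hh
  have he := hεpos h hh
  set e := ε h with hedef
  set α := h ^ (1 / Y) with hα
  have hα0 : 0 < α := by positivity
  have hαY : α ^ (1 + Y) = h * α := by
    rw [Real.rpow_add hα0, Real.rpow_one, hα, ← Real.rpow_mul hh.le, one_div,
      inv_mul_cancel₀ (by linarith), Real.rpow_one]; ring
  have hsq : 0 < √h := Real.sqrt_pos.2 hh
  have hss : √h ^ 2 = h := Real.sq_sqrt hh.le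
  have hhe : h / e ≤ e := by
    rw [one_le_div hsq] at ha
    rw [div_le_iff₀ he]; nlinarith
  set Z : ℝ → ℝ := fun x => s * (α * x + γ₀ * h) with hZ
  have hZc : Continuous Z := by fun_prop
  set E : ℝ → ℝ := fun x => Real.exp (-((e + Z x) ^ 2 / (4 * σ ^ 2 * h))) with hE
  set G : ℝ → ℝ := fun x => |Z x| ^ k * Real.exp (-((e + Z x) ^ 2 / (2 * σ ^ 2 * h))) with hG
  have hGc : Continuous G := by fun_prop
  have hGE : ∀ x, G x = |Z x| ^ k * E x * E x := by
    intro x; simp only [hG, hE]; rw [mul_assoc (|Z x| ^ k), ← Real.exp_add]; congr 2; field_simp; norm_num; try ring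
  have hG0 : ∀ x, 0 ≤ G x := fun x => by simp only [hG]; positivity
  set U : Set ℝ := {x | h / e < |Z x|} with hU
  have hUm : MeasurableSet U := (isOpen_lt continuous_const (hZc.abs)).measurableSet
  set bB : ℝ := KB * (e ^ k * Real.exp (-(e ^ 2) / (2 * σ ^ 2 * h))) with hbB
  have hnear : ∀ x, x ∉ U → G x ≤ bB := by
    intro x hx
    have hx : |Z x| ≤ h / e := not_lt.1 hx
    have h1 : |Z x| ^ k ≤ e ^ k := by gcongr; exact hx.trans hhe
    have h2 : Real.exp (-((e + Z x) ^ 2 / (2 * σ ^ 2 * h)))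
        ≤ KB * Real.exp (-(e ^ 2) / (2 * σ ^ 2 * h)) := by
      rw [hKB, ← Real.exp_add]
      apply Real.exp_le_exp.2
      have h3 : -h ≤ e * Z x := by
        have := (abs_le.1 hx).1
        have h4 : e * (-(h / e)) ≤ e * Z x := by gcongr
        have h5 : e * (-(h / e)) = -h := by field_simp
        linarith
      have h6 : 1 / σ ^ 2 + -(e ^ 2) / (2 * σ ^ 2 * h) = -((e ^ 2 - 2 * h) / (2 * σ ^ 2 * h)) := by
        field_simp; ring
      rw [h6, neg_le_neg_iff]
      gcongr
      nlinarith [sq_nonneg (Z x)]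
    calc G x ≤ e ^ k * (KB * Real.exp (-(e ^ 2) / (2 * σ ^ 2 * h))) := by
          simp only [hG]; gcongr
      _ = bB := by rw [hbB]; ring
  set b : ℝ := 1 / (4 * σ ^ 2 * h) with hb
  have hEb : ∀ x, E x = Real.exp (-b * (α * x + (γ₀ * h + s * e)) ^ 2) := by
    intro x; simp only [hE, hb, hZ]; congr 1
    have : (e + s * (α * x + γ₀ * h)) ^ 2 = (α * x + (γ₀ * h + s * e)) ^ 2 := by
      linear_combination ((α * x + γ₀ * h) ^ 2 - e ^ 2) * hs2
    rw [this]; ring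
  set cA : ℝ := C * (2 ^ (1 + Y) * (h * α)) * (K2 * (e ^ k * e ^ (-1 - Y))) with hcA
  have hcA0 : 0 ≤ cA := by positivity
  have hfar : ∀ x, x ∈ U → (C * |x| ^ (-1 - Y)) * G x ≤ cA * E x := by
    intro x hx
    have hx : h / e < |Z x| := hx
    have hz0 : 0 < |Z x| := lt_trans (by positivity) hx
    have h1 : |Z x| / (2 * α) ≤ |x| := by
      have h2 : |Z x| ≤ α * |x| + |γ₀| * h := by
        simp only [hZ]; rw [abs_mul, hsabs, one_mul]
        refine (abs_add_le _ _).trans ?_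
        rw [abs_mul, abs_mul, abs_of_pos hα0, abs_of_pos hh]
      have h3 : |γ₀| * h ≤ |Z x| / 2 := by
        have : |γ₀| * h = (|γ₀| * e) * (h / e) := by field_simp
        rw [this]
        have : 0 < h / e := by positivity
        nlinarith
      rw [div_le_iff₀ (by positivity)]; linarith
    have h4 : |x| ^ (-1 - Y) ≤ |Z x| ^ (-1 - Y) * (2 ^ (1 + Y) * (h * α)) := by
      calc |x| ^ (-1 - Y) ≤ (|Z x| / (2 * α)) ^ (-1 - Y) :=
            Real.rpow_le_rpow_of_nonpos (by positivity) h1 (by linarith)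
        _ = _ := by
          rw [Real.div_rpow hz0.le (by positivity), show -1 - Y = -(1 + Y) by ring,
            Real.rpow_neg (show 0 ≤ 2 * α by positivity), div_inv_eq_mul,
            Real.mul_rpow (by norm_num) hα0.le, hαY]
    have h5 := hpt h e (Z x) hh he ha hx
    have hE0 : 0 < E x := Real.exp_pos _
    rw [hGE]
    calc (C * |x| ^ (-1 - Y)) * (|Z x| ^ k * E x * E x)
        ≤ (C * (|Z x| ^ (-1 - Y) * (2 ^ (1 + Y) * (h * α)))) * (|Z x| ^ k * E x * E x) := by gcongr
      _ = C * (2 ^ (1 + Y) * (h * α)) * (|Z x| ^ k * |Z x| ^ (-1 - Y) * E x) * E x := by ring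
      _ ≤ C * (2 ^ (1 + Y) * (h * α)) * (K2 * (e ^ k * e ^ (-1 - Y))) * E x := by gcongr
  have hdm : Measurable (fun x : ℝ => ENNReal.ofReal (C * |x| ^ (-1 - Y))) := by fun_prop
  have hGm : Measurable (fun x : ℝ => ENNReal.ofReal (G x)) := by fun_prop
  have hfar2 : ∫⁻ x in U, ENNReal.ofReal (G x) ∂(P.map S)
      ≤ ENNReal.ofReal (KA * (h ^ ((3 : ℝ) / 2) * e ^ ((k : ℝ) - Y - 1))) := by
    calc _ ≤ ∫⁻ x in U, ENNReal.ofReal (G x)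
            ∂(volume.withDensity (fun x => ENNReal.ofReal (C * |x| ^ (-1 - Y)))) :=
          lintegral_mono' (Measure.restrict_mono le_rfl hle) le_rfl
      _ = ∫⁻ x in U, ENNReal.ofReal (C * |x| ^ (-1 - Y)) * ENNReal.ofReal (G x) := by
          rw [restrict_withDensity hUm, lintegral_withDensity_eq_lintegral_mul _ hdm hGm]
          rfl
      _ ≤ ∫⁻ x in U, ENNReal.ofReal cA * ENNReal.ofReal (E x) := by
          refine setLIntegral_mono' hUm fun x hx => ?_
          rw [← ENNReal.ofReal_mul (by positivity), ← ENNReal.ofReal_mul hcA0]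
          exact ENNReal.ofReal_le_ofReal (hfar x hx)
      _ ≤ ∫⁻ x, ENNReal.ofReal cA * ENNReal.ofReal (E x) := setLIntegral_le_lintegral _ _
      _ = ENNReal.ofReal (cA * (α⁻¹ * √(π / b))) := by
          rw [lintegral_const_mul' _ _ ENNReal.ofReal_ne_top]
          simp only [hEb]
          rw [gauss_affine b α _ (by positivity) hα0, ← ENNReal.ofReal_mul hcA0]
      _ = _ := by
          congr 1
          have h1 : √(π / b) = √(4 * π * σ ^ 2) * √h := by
            rw [← Real.sqrt_mul (by positivity), hb]; congr 1; field_simp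
          have h2 : h ^ ((3 : ℝ) / 2) = h * √h := by
            rw [Real.sqrt_eq_rpow, ← Real.rpow_one_add' hh.le (by norm_num)]; norm_num
          have h3 : e ^ ((k : ℝ) - Y - 1) = e ^ k * e ^ (-1 - Y) := by
            rw [show (k : ℝ) - Y - 1 = k + (-1 - Y) by ring, Real.rpow_add he, Real.rpow_natCast]
          rw [h1, h2, h3, hcA, hKA]; field_simp
  have hbB0 : 0 ≤ bB := by positivity
  have : IsProbabilityMeasure (P.map S) := Measure.isProbabilityMeasure_map hSmeas.aemeasurable
  calc _ = ∫⁻ x, ENNReal.ofReal (G x) ∂(P.map S) := by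
        rw [lintegral_map hGm hSmeas]
    _ = (∫⁻ x in U, ENNReal.ofReal (G x) ∂(P.map S)) + ∫⁻ x in Uᶜ, ENNReal.ofReal (G x) ∂(P.map S) :=
        (lintegral_add_compl _ hUm).symm
    _ ≤ ENNReal.ofReal (KA * (h ^ ((3 : ℝ) / 2) * e ^ ((k : ℝ) - Y - 1))) + ENNReal.ofReal bB := by
        refine add_le_add hfar2 ?_
        calc _ ≤ ∫⁻ x in Uᶜ, ENNReal.ofReal bB ∂(P.map S) :=
              setLIntegral_mono' hUm.compl fun x hx => ENNReal.ofReal_le_ofReal (hnear x hx)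
          _ ≤ ∫⁻ x, ENNReal.ofReal bB ∂(P.map S) := setLIntegral_le_lintegral _ _
          _ = _ := by simp
    _ = ENNReal.ofReal (KA * (h ^ ((3 : ℝ) / 2) * e ^ ((k : ℝ) - Y - 1)) + bB) :=
        (ENNReal.ofReal_add (by positivity) hbB0).symm
    _ ≤ _ := by
        apply ENNReal.ofReal_le_ofReal
        rw [hbB]
        have p1 : 0 ≤ h ^ ((3 : ℝ) / 2) * e ^ ((k : ℝ) - Y - 1) := by positivity
        have p2 : 0 ≤ e ^ k * Real.exp (-(e ^ 2) / (2 * σ ^ 2 * h)) := by positivity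
        nlinarith

lemma stable_density {Ω : Type*} [MeasurableSpace Ω] (P : Measure Ω) [IsProbabilityMeasure P]
    (Y Cp Cm : ℝ) (hY1 : 1 < Y) (hY2 : Y < 2) (hCp : 0 < Cp) (hCm : 0 < Cm)
    (S : Ω → ℝ) (hSmeas : Measurable S)
    (hScf : ∀ u : ℝ, ∫ ω, Complex.exp (Complex.I * u * S ω) ∂P = stableCF Y Cp Cm u) :
    ∃ C : ℝ, 0 < C ∧
      P.map S ≤ volume.withDensity (fun x => ENNReal.ofReal (C * |x| ^ (-1 - Y))) := by
  have hG : 0 < Real.Gamma (-Y) := by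
    have h1 : Real.Gamma (-Y + 1) = -Y * Real.Gamma (-Y) := Real.Gamma_add_one (by linarith)
    have h2 : Real.Gamma (-Y + 1 + 1) = (-Y + 1) * Real.Gamma (-Y + 1) :=
      Real.Gamma_add_one (by linarith)
    have h3 : 0 < Real.Gamma (-Y + 1 + 1) := Real.Gamma_pos_of_pos (by linarith)
    rw [h2, h1] at h3
    have h4 : 0 < Y * (Y - 1) := mul_pos (by linarith) (by linarith)
    have h5 : (-Y + 1) * (-Y * Real.Gamma (-Y)) = (Y * (Y - 1)) * Real.Gamma (-Y) := by ring
    rw [h5] at h3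
    exact (pos_iff_pos_of_mul_pos h3).1 h4
  have hcos : Real.cos (π * Y / 2) < 0 :=
    Real.cos_neg_of_pi_div_two_lt_of_lt (by nlinarith [Real.pi_pos]) (by nlinarith [Real.pi_pos])
  have hvs : 0 < varsigma Y Cp Cm := by
    unfold varsigma
    have := abs_pos.2 hcos.ne
    positivity
  set c : ℂ := ((varsigma Y Cp Cm ^ Y * (2 * π) ^ Y : ℝ) : ℂ) *
    (1 - Complex.I * ((Cp - Cm) / (Cp + Cm)) * Real.tan (π * Y / 2)) with hc
  have hcre : 0 < c.re := by
    have e1 : (1 - Complex.I * (((Cp : ℂ) - Cm) / (Cp + Cm)) * Real.tan (π * Y / 2))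
        = 1 - Complex.I * (((Cp - Cm) / (Cp + Cm) * Real.tan (π * Y / 2) : ℝ) : ℂ) := by
      push_cast; ring
    rw [hc, e1, Complex.re_ofReal_mul]
    simp only [Complex.sub_re, Complex.one_re, Complex.mul_re, Complex.I_re, Complex.I_im,
      Complex.ofReal_im, zero_mul, mul_zero, sub_zero, mul_one]
    positivity
  obtain ⟨C, hC, hhalf⟩ := half_line Y hY1 hY2 c hcre
  set F : ℝ → ℂ := fun v => stableCF Y Cp Cm (2 * π * v) with hF
  have hFpos : ∀ v : ℝ, 0 < v → F v = Complex.exp (-(c * (v ^ Y : ℝ))) := by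
    intro v hv
    have hv' : 0 < 2 * π * v := by positivity
    simp only [hF, stableCF, stablePart, hc]
    rw [Real.sign_of_pos hv', abs_of_pos hv', Real.mul_rpow (by positivity) hv.le]
    congr 1; push_cast; ring
  have hPS : IsProbabilityMeasure (P.map S) := Measure.isProbabilityMeasure_map hSmeas.aemeasurable
  have hFchar : ∀ v : ℝ, F v = charFun (P.map S) (2 * π * v) := by
    intro v
    simp only [hF]
    rw [← hScf, charFun_apply_real, integral_map hSmeas.aemeasurable (by fun_prop)]
    congr 1; ext ω; congr 1; ring
  have hFc : Continuous F := by
    have : F = fun v => charFun (P.map S) (2 * π * v) := funext hFchar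
    rw [this]
    exact continuous_charFun.comp (by fun_prop)
  have hFconj : ∀ v, F (-v) = (starRingEnd ℂ) (F v) := by
    intro v
    rw [hFchar, hFchar, ← charFun_neg, mul_neg]
  have hFi : IntegrableOn F (Ioi 0) := by
    have h := integrableOn_rpow_mul_exp_neg_mul_rpow (p := Y) (s := 0) (b := c.re)
      (by norm_num) (by linarith) hcre
    refine Integrable.mono' h hFc.aestronglyMeasurable ?_
    refine (ae_restrict_iff' measurableSet_Ioi).2 (Eventually.of_forall fun u hu => ?_)
    rw [hFpos u hu, Complex.norm_exp]; simp
  have hbd := density_bound Y C hY1 F hFc hFconj hFi (fun x hx => by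
      have := hhalf x hx
      rwa [setIntegral_congr_fun measurableSet_Ioi (g := fun u : ℝ =>
        Complex.exp (-(Complex.I * x * u)) * Complex.exp (-(c * (u ^ Y : ℝ)))) (fun u hu => by
          simp only; rw [hFpos u hu])]) (P.map S) (fun v => by
      rw [hFchar, charFun_apply_real]; congr 1; ext x; congr 1; push_cast; ring)
  refine ⟨2 * C * (2 * π) ^ (-1 - Y), by positivity, hbd.trans (le_of_eq ?_)⟩
  congr 1; ext x; congr 1
  rw [abs_mul, abs_of_pos (show (0:ℝ) < 2 * π by positivity),
    Real.mul_rpow (by positivity) (abs_nonneg x)]; ring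

/-- Lemma C.2: moment-weighted Gaussian-density expectations of the shifted
stable variable `J′_h = S_h + γ₀h`. -/
theorem moment_weighted_gaussian_density_estimates
    {Ω : Type*} [MeasurableSpace Ω] (P : Measure Ω) [IsProbabilityMeasure P]
    (Y Cp Cm σ : ℝ)
    (hY1 : 1 < Y) (hY2 : Y < 2) (hCp : 0 < Cp) (hCm : 0 < Cm) (hσ : 0 < σ)
    (S : Ω → ℝ) (hSmeas : Measurable S)
    (hScf : ∀ u : ℝ, ∫ ω, Complex.exp (Complex.I * u * S ω) ∂P = stableCF Y Cp Cm u)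
    (γ₀ : ℝ) (k : ℕ)
    -- the threshold `ε = ε(h)`
    (ε : ℝ → ℝ) (hεpos : ∀ h : ℝ, 0 < h → 0 < ε h)
    (hε0 : Tendsto ε (𝓝[>] (0 : ℝ)) (𝓝 0))
    (hεsqrt : Tendsto (fun h => ε h / Real.sqrt h) (𝓝[>] (0 : ℝ)) atTop) :
    ∀ s : ℝ, s = 1 ∨ s = -1 →
      -- part (1): `E[(∓J′_h)^k φ((ε ± J′_h)/(σ√h))] = O(h^{3/2} ε^{k−Y−1}) + O(ε^k e^{−ε²/(2σ²h)})`
      (∃ R₁ R₂ : ℝ → ℝ,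
        (∀ h : ℝ, 0 < h →
          (∫ ω, (-s * (h ^ (1 / Y) * S ω + γ₀ * h)) ^ k *
              gaussDensity ((ε h + s * (h ^ (1 / Y) * S ω + γ₀ * h)) / (σ * Real.sqrt h)) ∂P)
            = R₁ h + R₂ h) ∧
        R₁ =O[𝓝[>] (0 : ℝ)] (fun h => h ^ ((3 : ℝ) / 2) * ε h ^ ((k : ℝ) - Y - 1)) ∧
        R₂ =O[𝓝[>] (0 : ℝ)]
          (fun h => ε h ^ k * Real.exp (-(ε h ^ 2) / (2 * σ ^ 2 * h)))) ∧
      -- part (2): `E[((ε ± J′_h)/(σ√h))^k φ((ε ± J′_h)/(σ√h))]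
      --            = O(h^{(3−k)/2} ε^{k−Y−1}) + O(ε^k h^{−k/2} e^{−ε²/(2σ²h)})`
      (∃ R₁ R₂ : ℝ → ℝ,
        (∀ h : ℝ, 0 < h →
          (∫ ω, ((ε h + s * (h ^ (1 / Y) * S ω + γ₀ * h)) / (σ * Real.sqrt h)) ^ k *
              gaussDensity ((ε h + s * (h ^ (1 / Y) * S ω + γ₀ * h)) / (σ * Real.sqrt h)) ∂P)
            = R₁ h + R₂ h) ∧
        R₁ =O[𝓝[>] (0 : ℝ)] (fun h => h ^ ((3 - (k : ℝ)) / 2) * ε h ^ ((k : ℝ) - Y - 1)) ∧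
        R₂ =O[𝓝[>] (0 : ℝ)]
          (fun h => ε h ^ k * h ^ (-(k : ℝ) / 2) *
            Real.exp (-(ε h ^ 2) / (2 * σ ^ 2 * h)))) := by
  intro s hs
  obtain ⟨C, hC, hle⟩ := stable_density P Y Cp Cm hY1 hY2 hCp hCm S hSmeas hScf
  obtain ⟨K0, hK0, hE0⟩ := main_est P Y C σ hY1 hY2 hC hσ S hSmeas hle γ₀ 0 ε hεpos hε0 hεsqrt s hs
  obtain ⟨Kk, hKk, hEk⟩ := main_est P Y C σ hY1 hY2 hC hσ S hSmeas hle γ₀ k ε hεpos hε0 hεsqrt s hs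
  have hsabs : |s| = 1 := by rcases hs with rfl | rfl <;> norm_num
  have hgd : ∀ h y : ℝ, 0 < h → 0 ≤ gaussDensity (y / (σ * Real.sqrt h)) ∧
      gaussDensity (y / (σ * Real.sqrt h)) ≤ Real.exp (-(y ^ 2 / (2 * σ ^ 2 * h))) := by
    intro h y hh
    have hss : √h ^ 2 = h := Real.sq_sqrt hh.le
    have h1 : -(y / (σ * √h)) ^ 2 / 2 = -(y ^ 2 / (2 * σ ^ 2 * h)) := by
      rw [div_pow, mul_pow, hss]; field_simp
    unfold gaussDensity
    rw [h1]
    refine ⟨by positivity, ?_⟩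
    refine mul_le_of_le_one_left (Real.exp_pos _).le (inv_le_one_of_one_le₀ ?_)
    rw [Real.one_le_sqrt]
    have := Real.pi_gt_three; linarith
  constructor
  · refine split_bigO _ _ _ Kk hKk (fun h hh => ?_) (fun h hh => ?_) ?_
    · have := hεpos h hh; positivity
    · have := hεpos h hh; positivity
    filter_upwards [self_mem_nhdsWithin, hEk] with h hh hb
    have hh : 0 < h := hh
    have he := hεpos h hh
    rw [← Real.norm_eq_abs]
    refine (norm_integral_le_lintegral_norm _).trans ?_
    refine ENNReal.toReal_le_of_le_ofReal (by positivity) (le_trans ?_ hb)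
    refine lintegral_mono fun ω => ENNReal.ofReal_le_ofReal ?_
    obtain ⟨g0, g1⟩ := hgd h (ε h + s * (h ^ (1 / Y) * S ω + γ₀ * h)) hh
    rw [norm_mul, norm_pow, Real.norm_eq_abs, Real.norm_of_nonneg g0, neg_mul, abs_neg]
    gcongr
  · refine split_bigO _ _ _ ((2 / σ) ^ k * (K0 + Kk)) (by positivity) (fun h hh => ?_)
      (fun h hh => ?_) ?_
    · have := hεpos h hh; positivity
    · have := hεpos h hh; positivity
    filter_upwards [self_mem_nhdsWithin, hE0, hEk] with h hh hb0 hbk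
    have hh : 0 < h := hh
    have he := hεpos h hh
    have hsq : 0 < √h := Real.sqrt_pos.2 hh
    rw [← Real.norm_eq_abs]
    refine (norm_integral_le_lintegral_norm _).trans ?_
    refine ENNReal.toReal_le_of_le_ofReal (by positivity) ?_
    set Z : Ω → ℝ := fun ω => s * (h ^ (1 / Y) * S ω + γ₀ * h) with hZ
    set D : ℝ := (2 / (σ * √h)) ^ k with hD
    have hD0 : 0 ≤ D := by positivity
    have hDe : D = (2 / σ) ^ k * h ^ (-(k : ℝ) / 2) := by
      have : h ^ (-(k : ℝ) / 2) = ((√h) ^ k)⁻¹ := by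
        rw [Real.sqrt_eq_rpow, ← Real.rpow_natCast, ← Real.rpow_mul hh.le, ← Real.rpow_neg hh.le]
        congr 1; ring
      rw [this, hD, div_pow, div_pow, mul_pow]; field_simp
    have hZm : Measurable Z := by fun_prop
    set X : Ω → ℝ := fun ω => Real.exp (-((ε h + Z ω) ^ 2 / (2 * σ ^ 2 * h))) with hX
    have hXm : Measurable X := by fun_prop
    calc _ ≤ ∫⁻ ω, (ENNReal.ofReal (D * ε h ^ k) * ENNReal.ofReal (|Z ω| ^ 0 * X ω)
            + ENNReal.ofReal D * ENNReal.ofReal (|Z ω| ^ k * X ω)) ∂P := by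
          refine lintegral_mono fun ω => ?_
          have hX0 : 0 < X ω := Real.exp_pos _
          rw [← ENNReal.ofReal_mul (by positivity), ← ENNReal.ofReal_mul (by positivity),
            ← ENNReal.ofReal_add (by positivity) (by positivity)]
          apply ENNReal.ofReal_le_ofReal
          obtain ⟨g0, g1⟩ := hgd h (ε h + Z ω) hh
          have h1 : |ε h + Z ω| ^ k ≤ 2 ^ k * (ε h ^ k + |Z ω| ^ k) := by
            calc |ε h + Z ω| ^ k ≤ (ε h + |Z ω|) ^ k := by
                  gcongr
                  refine (abs_add_le _ _).trans (le_of_eq ?_)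
                  rw [abs_of_pos he]
              _ ≤ 2 ^ (k - 1) * (ε h ^ k + |Z ω| ^ k) := add_pow_le he.le (abs_nonneg _) k
              _ ≤ _ := by
                  gcongr
                  · norm_num
                  · omega
          calc _ = |ε h + Z ω| ^ k / (σ * √h) ^ k * gaussDensity ((ε h + Z ω) / (σ * √h)) := by
                rw [norm_mul, norm_pow, Real.norm_of_nonneg g0, norm_div, Real.norm_eq_abs,
                  Real.norm_of_nonneg (show 0 ≤ σ * √h by positivity), div_pow]
            _ ≤ 2 ^ k * (ε h ^ k + |Z ω| ^ k) / (σ * √h) ^ k * X ω := by gcongr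
            _ = _ := by rw [hD, div_pow]; ring
      _ = ENNReal.ofReal (D * ε h ^ k) * ∫⁻ ω, ENNReal.ofReal (|Z ω| ^ 0 * X ω) ∂P
            + ENNReal.ofReal D * ∫⁻ ω, ENNReal.ofReal (|Z ω| ^ k * X ω) ∂P := by
          rw [lintegral_add_left (by fun_prop), lintegral_const_mul' _ _ ENNReal.ofReal_ne_top,
            lintegral_const_mul' _ _ ENNReal.ofReal_ne_top]
      _ ≤ _ := add_le_add (mul_le_mul_right hb0 _) (mul_le_mul_right hbk _)
      _ = _ := by
          rw [← ENNReal.ofReal_mul (by positivity), ← ENNReal.ofReal_mul (by positivity),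
            ← ENNReal.ofReal_add (by positivity) (by positivity)]
          congr 1
          have h2 : h ^ ((3 - (k : ℝ)) / 2) = h ^ ((3 : ℝ) / 2) * h ^ (-(k : ℝ) / 2) := by
            rw [← Real.rpow_add hh]; congr 1; ring
          have h3 : ε h ^ ((k : ℝ) - Y - 1) = ε h ^ k * ε h ^ (((0 : ℕ) : ℝ) - Y - 1) := by
            rw [← Real.rpow_natCast (ε h) k, ← Real.rpow_add he]; congr 1; push_cast; ring
          rw [hDe, h2, h3]; ring

end
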